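/- arXiv:2205.03723 — 3 statements merged into one kernel-verified Lean document; each statement's English description precedes it below -/
import Mathlib

section
/- If (A, ·, ⋄, ε) is an admissible Novikov-Poisson color algebra and α: A → A is a morphism, then the Yau twist (A, ·_α, ⋄_α, ε, α), with x ·_α y = α(x·y) and x ⋄_α y = α(x⋄y), is an admissible Hom-Novikov-Poisson color Hom-algebra. -/
open scoped TensorProduct

section ColorHomDefs

variable {K Γ A V : Type*} [Field K] [AddCommGroup Γ]
variable [AddCommGroup A] [Module K A] [AddCommGroup V] [Module K V]

/-- A commutation factor (skew-symmetric bicharacter) on `Γ` with values in `K`. -/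
def IsCommFactor (ε : Γ → Γ → K) : Prop :=
  (∀ a b, ε a b ≠ 0) ∧ (∀ a b, ε a b * ε b a = 1) ∧
    (∀ a b c, ε a (b + c) = ε a b * ε a c) ∧
    (∀ a b c, ε (a + b) c = ε a c * ε b c)

/-- The (even bilinear) product respects the grading. -/
def GradedMul (𝒜 : Γ → Submodule K A) (μ : A →ₗ[K] A →ₗ[K] A) : Prop :=
  ∀ ⦃γ₁ γ₂ : Γ⦄ ⦃x y : A⦄, x ∈ 𝒜 γ₁ → y ∈ 𝒜 γ₂ → μ x y ∈ 𝒜 (γ₁ + γ₂)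

/-- An even linear map. -/
def GradedEnd (𝒜 : Γ → Submodule K A) (f : A →ₗ[K] A) : Prop :=
  ∀ ⦃γ : Γ⦄ ⦃x : A⦄, x ∈ 𝒜 γ → f x ∈ 𝒜 γ

/-- ε-commutativity on homogeneous elements. -/
def IsEpsComm (𝒜 : Γ → Submodule K A) (ε : Γ → Γ → K) (μ : A →ₗ[K] A →ₗ[K] A) : Prop :=
  ∀ ⦃γ₁ γ₂ : Γ⦄ ⦃x y : A⦄, x ∈ 𝒜 γ₁ → y ∈ 𝒜 γ₂ → μ x y = ε γ₁ γ₂ • μ y x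

/-- Hom-associativity on homogeneous elements. -/
def IsHomAssoc (𝒜 : Γ → Submodule K A) (μ : A →ₗ[K] A →ₗ[K] A) (α : A →ₗ[K] A) : Prop :=
  ∀ ⦃γ₁ γ₂ γ₃ : Γ⦄ ⦃x y z : A⦄, x ∈ 𝒜 γ₁ → y ∈ 𝒜 γ₂ → z ∈ 𝒜 γ₃ →
    μ (μ x y) (α z) = μ (α x) (μ y z)

/-- The two defining identities of a Hom-Novikov color Hom-algebra. -/
def IsHomNovikov (𝒜 : Γ → Submodule K A) (ε : Γ → Γ → K) (μ : A →ₗ[K] A →ₗ[K] A)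
    (α : A →ₗ[K] A) : Prop :=
  (∀ ⦃γ₁ γ₂ γ₃ : Γ⦄ ⦃x y z : A⦄, x ∈ 𝒜 γ₁ → y ∈ 𝒜 γ₂ → z ∈ 𝒜 γ₃ →
      μ (μ x y) (α z) - μ (α x) (μ y z)
        = ε γ₁ γ₂ • (μ (μ y x) (α z) - μ (α y) (μ x z))) ∧
  (∀ ⦃γ₁ γ₂ γ₃ : Γ⦄ ⦃x y z : A⦄, x ∈ 𝒜 γ₁ → y ∈ 𝒜 γ₂ → z ∈ 𝒜 γ₃ →
      μ (μ x y) (α z) = ε γ₂ γ₃ • μ (μ x z) (α y))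

/-- ε-skew-symmetry and the ε-Hom-Jacobi identity for a bilinear bracket. -/
def IsHomLie (𝒜 : Γ → Submodule K A) (ε : Γ → Γ → K) (br : A →ₗ[K] A →ₗ[K] A)
    (α : A →ₗ[K] A) : Prop :=
  (∀ ⦃γ₁ γ₂ : Γ⦄ ⦃x y : A⦄, x ∈ 𝒜 γ₁ → y ∈ 𝒜 γ₂ → br x y = -(ε γ₁ γ₂ • br y x)) ∧
  (∀ ⦃γ₁ γ₂ γ₃ : Γ⦄ ⦃x y z : A⦄, x ∈ 𝒜 γ₁ → y ∈ 𝒜 γ₂ → z ∈ 𝒜 γ₃ →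
      ε γ₃ γ₁ • br (α x) (br y z) + ε γ₁ γ₂ • br (α y) (br z x)
        + ε γ₂ γ₃ • br (α z) (br x y) = 0)

/-- Compatibility conditions of a Hom-Novikov-Poisson color Hom-algebra. -/
def HNPCompat (𝒜 : Γ → Submodule K A) (ε : Γ → Γ → K) (μ d : A →ₗ[K] A →ₗ[K] A)
    (α : A →ₗ[K] A) : Prop :=
  (∀ ⦃γ₁ γ₂ γ₃ : Γ⦄ ⦃x y z : A⦄, x ∈ 𝒜 γ₁ → y ∈ 𝒜 γ₂ → z ∈ 𝒜 γ₃ →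
      d (μ x y) (α z) = ε γ₂ γ₃ • μ (d x z) (α y)) ∧
  (∀ ⦃γ₁ γ₂ γ₃ : Γ⦄ ⦃x y z : A⦄, x ∈ 𝒜 γ₁ → y ∈ 𝒜 γ₂ → z ∈ 𝒜 γ₃ →
      μ (d x y) (α z) - d (α x) (μ y z)
        = ε γ₁ γ₂ • (μ (d y x) (α z) - d (α y) (μ x z)))

/-- Hom-Novikov-Poisson color Hom-algebra: `μ` is the ε-commutative Hom-associative
product, `d` the Hom-Novikov product. -/
def IsHNP (𝒜 : Γ → Submodule K A) (ε : Γ → Γ → K) (μ d : A →ₗ[K] A →ₗ[K] A)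
    (α : A →ₗ[K] A) : Prop :=
  GradedMul 𝒜 μ ∧ GradedMul 𝒜 d ∧ GradedEnd 𝒜 α ∧
    IsEpsComm 𝒜 ε μ ∧ IsHomAssoc 𝒜 μ α ∧ IsHomNovikov 𝒜 ε d α ∧ HNPCompat 𝒜 ε μ d α

/-- Admissibility: the left Hom-associator mixing the two products vanishes. -/
def IsAdmissibleHNP (𝒜 : Γ → Submodule K A) (ε : Γ → Γ → K) (μ d : A →ₗ[K] A →ₗ[K] A)
    (α : A →ₗ[K] A) : Prop :=
  IsHNP 𝒜 ε μ d α ∧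
    ∀ ⦃γ₁ γ₂ γ₃ : Γ⦄ ⦃x y z : A⦄, x ∈ 𝒜 γ₁ → y ∈ 𝒜 γ₂ → z ∈ 𝒜 γ₃ →
      d (μ x y) (α z) = d (α x) (μ y z)

/-- Gelfand-Dorfman compatibility for a bilinear bracket. -/
def GDCompat (𝒜 : Γ → Submodule K A) (ε : Γ → Γ → K) (μ br : A →ₗ[K] A →ₗ[K] A)
    (α : A →ₗ[K] A) : Prop :=
  ∀ ⦃γ₁ γ₂ γ₃ : Γ⦄ ⦃x y z : A⦄, x ∈ 𝒜 γ₁ → y ∈ 𝒜 γ₂ → z ∈ 𝒜 γ₃ →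
    μ (α y) (br x z)
      = ε γ₂ γ₁ • br (α x) (μ y z) - ε (γ₁ + γ₂) γ₃ • br (α z) (μ y x)
        + μ (br y x) (α z) - ε γ₁ γ₃ • μ (br y z) (α x)

/-- The transposed Hom-ε-Leibniz identity. -/
def TransposedLeibniz (𝒜 : Γ → Submodule K A) (ε : Γ → Γ → K) (μ br : A →ₗ[K] A →ₗ[K] A)
    (α : A →ₗ[K] A) : Prop :=
  ∀ ⦃γ₁ γ₂ γ₃ : Γ⦄ ⦃x y z : A⦄, x ∈ 𝒜 γ₁ → y ∈ 𝒜 γ₂ → z ∈ 𝒜 γ₃ →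
    (2 : K) • μ (α z) (br x y) = br (μ z x) (α y) + ε γ₃ γ₁ • br (α x) (μ z y)

/-- The ε-commutator bracket of homogeneous elements of degrees `γ`, `δ`. -/
def brkt (ε : Γ → Γ → K) (μ : A →ₗ[K] A →ₗ[K] A) (γ δ : Γ) (x y : A) : A :=
  μ x y - ε γ δ • μ y x

/-- The Yau twist `x ∗ y = α (μ x y)` of a bilinear product. -/
def twistMul (α : A →ₗ[K] A) (μ : A →ₗ[K] A →ₗ[K] A) : A →ₗ[K] A →ₗ[K] A :=
  (LinearMap.llcomp K A A A α).comp μ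

/-- The product `x ⋄ y = μ x (D y)`. -/
def precompMul (D : A →ₗ[K] A) (μ : A →ₗ[K] A →ₗ[K] A) : A →ₗ[K] A →ₗ[K] A :=
  (LinearMap.lcomp K A D).comp μ

/-- Semidirect product of an ε-commutative Hom-associative color Hom-algebra with a
bimodule, on homogeneous elements of degrees `γ₁`, `γ₂`. -/
def sdDot (ε : Γ → Γ → K) (μ : A →ₗ[K] A →ₗ[K] A) (s : A →ₗ[K] V →ₗ[K] V)
    (γ₁ γ₂ : Γ) (X Y : A × V) : A × V :=
  (μ X.1 Y.1, s X.1 Y.2 + ε γ₁ γ₂ • s Y.1 X.2)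

/-- Semidirect product of a Hom-Novikov color Hom-algebra with a bimodule. -/
def sdDiam (μ : A →ₗ[K] A →ₗ[K] A) (l r : A →ₗ[K] V →ₗ[K] V) (X Y : A × V) : A × V :=
  (μ X.1 Y.1, l X.1 Y.2 + r Y.1 X.2)

/-- Semidirect product bracket of a Hom-Lie color Hom-algebra with a representation. -/
def sdBr (ε : Γ → Γ → K) (br : A →ₗ[K] A →ₗ[K] A) (ρ : A →ₗ[K] V →ₗ[K] V)
    (γ₁ γ₂ : Γ) (X Y : A × V) : A × V :=
  (br X.1 Y.1, ρ X.1 Y.2 - ε γ₁ γ₂ • ρ Y.1 X.2)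

/-- The twisting map `α ⊕ β` on `A × V`. -/
def sdEnd (α : A →ₗ[K] A) (β : V →ₗ[K] V) (X : A × V) : A × V := (α X.1, β X.2)

end ColorHomDefs

/-!
Both sides of each defining identity of degree three are built from iterated products such as
`d (μ x y) (β z)`. Twisting the two products by a morphism `α`, and the structure map from `β` to
`α ∘ β`, applies `α²` to each of them; in particular the left Hom-associator of the twist is `α²`
of the original one. Since `α` is linear, the identities carry over for an arbitrary structure
map `β`, and color algebras are the case `β = id`.
-/

section YauTwist

variable {K Γ A : Type*} [Field K] [AddCommGroup A] [Module K A]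
variable {𝒜 : Γ → Submodule K A} {ε : Γ → Γ → K}
variable {μ d : A →ₗ[K] A →ₗ[K] A} {α β : A →ₗ[K] A}

theorem twistMul_apply (α : A →ₗ[K] A) (μ : A →ₗ[K] A →ₗ[K] A) (x y : A) :
    twistMul α μ x y = α (μ x y) :=
  rfl

theorem twistMul_map_map (hmorμ : ∀ x y : A, α (μ x y) = μ (α x) (α y)) (x y : A) :
    twistMul α μ (α x) (α y) = α (α (μ x y)) := by
  rw [twistMul_apply, ← hmorμ]

theorem twistMul_twistMul_left (hmord : ∀ x y : A, α (d x y) = d (α x) (α y))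
    (μ : A →ₗ[K] A →ₗ[K] A) (β : A →ₗ[K] A) (x y z : A) :
    twistMul α d (twistMul α μ x y) ((α ∘ₗ β) z) = α (α (d (μ x y) (β z))) :=
  twistMul_map_map hmord (μ x y) (β z)

theorem twistMul_twistMul_right (hmord : ∀ x y : A, α (d x y) = d (α x) (α y))
    (μ : A →ₗ[K] A →ₗ[K] A) (β : A →ₗ[K] A) (x y z : A) :
    twistMul α d ((α ∘ₗ β) x) (twistMul α μ y z) = α (α (d (β x) (μ y z))) :=
  twistMul_map_map hmord (β x) (μ y z)

theorem GradedEnd.comp (hα : GradedEnd 𝒜 α) (hβ : GradedEnd 𝒜 β) : GradedEnd 𝒜 (α ∘ₗ β) :=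
  fun _ _ hx => hα (hβ hx)

theorem IsEpsComm.yauTwist (hμ : IsEpsComm 𝒜 ε μ) (α : A →ₗ[K] A) :
    IsEpsComm 𝒜 ε (twistMul α μ) := by
  intro γ₁ γ₂ x y hx hy
  rw [twistMul_apply, twistMul_apply, hμ hx hy, map_smul]

theorem IsHomAssoc.yauTwist (h : IsHomAssoc 𝒜 μ β)
    (hmorμ : ∀ x y : A, α (μ x y) = μ (α x) (α y)) :
    IsHomAssoc 𝒜 (twistMul α μ) (α ∘ₗ β) := by
  intro γ₁ γ₂ γ₃ x y z hx hy hz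
  rw [twistMul_twistMul_left hmorμ, twistMul_twistMul_right hmorμ, h hx hy hz]

theorem IsHomNovikov.yauTwist (h : IsHomNovikov 𝒜 ε d β)
    (hmord : ∀ x y : A, α (d x y) = d (α x) (α y)) :
    IsHomNovikov 𝒜 ε (twistMul α d) (α ∘ₗ β) := by
  obtain ⟨left_symm, right_comm⟩ := h
  constructor <;> intro γ₁ γ₂ γ₃ x y z hx hy hz
  · simp only [twistMul_twistMul_left hmord, twistMul_twistMul_right hmord, ← map_sub, ← map_smul,
      left_symm hx hy hz]
  · simp only [twistMul_twistMul_left hmord, ← map_smul, right_comm hx hy hz]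

theorem HNPCompat.yauTwist (h : HNPCompat 𝒜 ε μ d β)
    (hmorμ : ∀ x y : A, α (μ x y) = μ (α x) (α y))
    (hmord : ∀ x y : A, α (d x y) = d (α x) (α y)) :
    HNPCompat 𝒜 ε (twistMul α μ) (twistMul α d) (α ∘ₗ β) := by
  obtain ⟨right_comm, left_symm⟩ := h
  constructor <;> intro γ₁ γ₂ γ₃ x y z hx hy hz
  · simp only [twistMul_twistMul_left hmorμ, twistMul_twistMul_left hmord, ← map_smul,
      right_comm hx hy hz]
  · simp only [twistMul_twistMul_left hmorμ, twistMul_twistMul_right hmord, ← map_sub, ← map_smul,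
      left_symm hx hy hz]

variable [AddCommGroup Γ]

theorem GradedMul.yauTwist (hμ : GradedMul 𝒜 μ) (hα : GradedEnd 𝒜 α) :
    GradedMul 𝒜 (twistMul α μ) :=
  fun _ _ _ _ hx hy => hα (hμ hx hy)

theorem IsHNP.yauTwist (h : IsHNP 𝒜 ε μ d β) (hα : GradedEnd 𝒜 α)
    (hmorμ : ∀ x y : A, α (μ x y) = μ (α x) (α y))
    (hmord : ∀ x y : A, α (d x y) = d (α x) (α y)) :
    IsHNP 𝒜 ε (twistMul α μ) (twistMul α d) (α ∘ₗ β) := by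
  obtain ⟨graded_μ, graded_d, graded_β, comm, assoc, novikov, compat⟩ := h
  exact ⟨graded_μ.yauTwist hα, graded_d.yauTwist hα, hα.comp graded_β, comm.yauTwist α,
    assoc.yauTwist hmorμ, novikov.yauTwist hmord, compat.yauTwist hmorμ hmord⟩

theorem yauTwist_admissibleNovikovPoisson_general (h : IsAdmissibleHNP 𝒜 ε μ d β)
    (hα : GradedEnd 𝒜 α)
    (hmorμ : ∀ x y : A, α (μ x y) = μ (α x) (α y))
    (hmord : ∀ x y : A, α (d x y) = d (α x) (α y)) :
    IsAdmissibleHNP 𝒜 ε (twistMul α μ) (twistMul α d) (α ∘ₗ β) := by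
  obtain ⟨hnp, admissible⟩ := h
  refine ⟨hnp.yauTwist hα hmorμ hmord, fun γ₁ γ₂ γ₃ x y z hx hy hz => ?_⟩
  rw [twistMul_twistMul_left hmord, twistMul_twistMul_right hmord, admissible hx hy hz]

end YauTwist

/-- the Yau twist of an admissible Novikov-Poisson color algebra
along a morphism `α` is an admissible Hom-Novikov-Poisson color Hom-algebra. -/
theorem yauTwist_admissibleNovikovPoisson
    {K Γ A : Type*} [Field K] [AddCommGroup Γ] [AddCommGroup A] [Module K A]
    (𝒜 : Γ → Submodule K A) (ε : Γ → Γ → K)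
    (μ d : A →ₗ[K] A →ₗ[K] A) (α : A →ₗ[K] A)
    (hε : IsCommFactor ε)
    (hNP : IsAdmissibleHNP 𝒜 ε μ d (LinearMap.id))
    (hα : GradedEnd 𝒜 α)
    (hmorμ : ∀ x y : A, α (μ x y) = μ (α x) (α y))
    (hmord : ∀ x y : A, α (d x y) = d (α x) (α y)) :
    IsAdmissibleHNP 𝒜 ε (twistMul α μ) (twistMul α d) α := by
  simpa only [LinearMap.comp_id] using
    yauTwist_admissibleNovikovPoisson_general hNP hα hmorμ hmord
end

section
/- Let (A₁, ·₁, ⋄₁, ε, α₁) and (A₂, ·₂, ⋄₂, ε, α₂) be admissible Hom-Novikov-Poisson color Hom-algebras graded by the same group Γ with commutation factor ε. Then A₁ ⊗ A₂ with α = α₁⊗α₂, product (x₁⊗x₂)·(y₁⊗y₂) = ε(x₂,y₁)(x₁·₁y₁)⊗(x₂·₂y₂), and product (x₁⊗x₂)⋄(y₁⊗y₂) = ε(x₂,y₁)((x₁⋄₁y₁)⊗(x₂·₂y₂) + (x₁·₁y₁)⊗(x₂⋄₂y₂)) is an admissible Hom-Novikov-Poisson color Hom-algebra, where x₁⊗x₂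 has degree deg(x₁)+deg(x₂). -/
open scoped TensorProduct

section TensorHNP

variable {K Γ A₁ A₂ : Type*} [Field K] [AddCommGroup Γ]
variable [AddCommGroup A₁] [Module K A₁] [AddCommGroup A₂] [Module K A₂]

/-- The dot product of homogeneous pure tensors: here `δ₁` is the degree of the
second component of the left factor and `δ₂` the degree of the first component of
the right factor. -/
noncomputable def tDot (ε : Γ → Γ → K) (μ₁ : A₁ →ₗ[K] A₁ →ₗ[K] A₁)
    (μ₂ : A₂ →ₗ[K] A₂ →ₗ[K] A₂) (δ₁ δ₂ : Γ) (x₁ : A₁) (x₂ : A₂) (y₁ : A₁) (y₂ : A₂) :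
    A₁ ⊗[K] A₂ :=
  ε δ₁ δ₂ • (μ₁ x₁ y₁ ⊗ₜ[K] μ₂ x₂ y₂)

/-- The diamond product of homogeneous pure tensors. -/
noncomputable def tDiam (ε : Γ → Γ → K) (μ₁ d₁ : A₁ →ₗ[K] A₁ →ₗ[K] A₁)
    (μ₂ d₂ : A₂ →ₗ[K] A₂ →ₗ[K] A₂) (δ₁ δ₂ : Γ) (x₁ : A₁) (x₂ : A₂) (y₁ : A₁) (y₂ : A₂) :
    A₁ ⊗[K] A₂ :=
  ε δ₁ δ₂ • ((d₁ x₁ y₁) ⊗ₜ[K] (μ₂ x₂ y₂) + (μ₁ x₁ y₁) ⊗ₜ[K] (d₂ x₂ y₂))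

/-- Grading of the tensor product: the degree-`γ` part is spanned by the pure
tensors `x₁ ⊗ x₂` with `x₁`, `x₂` homogeneous of degrees summing to `γ`. -/
noncomputable def tGrading (𝒜₁ : Γ → Submodule K A₁) (𝒜₂ : Γ → Submodule K A₂)
    (γ : Γ) : Submodule K (A₁ ⊗[K] A₂) :=
  Submodule.span K {t | ∃ (γ₁ γ₂ : Γ) (x₁ : A₁) (x₂ : A₂),
    γ₁ + γ₂ = γ ∧ x₁ ∈ 𝒜₁ γ₁ ∧ x₂ ∈ 𝒜₂ γ₂ ∧ t = x₁ ⊗ₜ[K] x₂}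

/-! In an admissible algebra every triple product of `x, y, z`, in this order, involving `⋄` exactly
once equals `S = (x · y) ⋄ α z`, and both `S` and `T = (x · y) · α z` are ε-symmetric in `x, y, z`.
Hence, up to one common sign, a triple product of pure tensors involving `⋄` once is
`S ⊗ T + T ⊗ S`; this settles the compatibility conditions and admissibility. With two diamonds,
`(X ⋄ Y) ⋄ α Z` is `P ⊗ T + 2 S ⊗ S + T ⊗ P` and `α X ⋄ (Y ⋄ Z)` is `Q ⊗ T + 2 S ⊗ S + T ⊗ Q`,
where `P = (x ⋄ y) ⋄ α z` and `Q = α x ⋄ (y ⋄ z)`. The mixed terms `S ⊗ S` cancel in the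
associator, leaving the Novikov identities of the two factors. -/

section TripleProducts

variable {A V : Type*} [AddCommGroup A] [Module K A] [AddCommGroup V] [Module K V]
variable {𝒜 : Γ → Submodule K A} {ε : Γ → Γ → K} {μ d : A →ₗ[K] A →ₗ[K] A} {α : A →ₗ[K] A}
variable {a b c : Γ} {x y z : A}

omit [AddCommGroup Γ] in
theorem IsEpsComm.map_mul_comm (hμ : IsEpsComm 𝒜 ε μ) (f : A →ₗ[K] V)
    (hx : x ∈ 𝒜 a) (hy : y ∈ 𝒜 b) : f (μ x y) = ε a b • f (μ y x) := by
  rw [hμ hx hy, map_smul]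

omit [AddCommGroup Γ] in
theorem IsEpsComm.left_comm (hμ : IsEpsComm 𝒜 ε μ) (f : A →ₗ[K] A →ₗ[K] V) (w : A)
    (hx : x ∈ 𝒜 a) (hy : y ∈ 𝒜 b) : f (μ x y) w = ε a b • f (μ y x) w :=
  hμ.map_mul_comm (f.flip w) hx hy

omit [AddCommGroup Γ] in
theorem IsEpsComm.right_comm (hμ : IsEpsComm 𝒜 ε μ) {f : A →ₗ[K] A →ₗ[K] V}
    (hf : ∀ ⦃γ₁ γ₂ γ₃ : Γ⦄ ⦃x y z : A⦄, x ∈ 𝒜 γ₁ → y ∈ 𝒜 γ₂ → z ∈ 𝒜 γ₃ →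
      f (μ x y) (α z) = f (α x) (μ y z))
    (hx : x ∈ 𝒜 a) (hy : y ∈ 𝒜 b) (hz : z ∈ 𝒜 c) :
    f (μ x y) (α z) = ε b c • f (μ x z) (α y) := by
  rw [hf hx hy hz, hf hx hz hy, hμ.map_mul_comm (f (α x)) hy hz]

namespace IsAdmissibleHNP

theorem gradedMul (h : IsAdmissibleHNP 𝒜 ε μ d α) : GradedMul 𝒜 μ := h.1.1

theorem gradedDiam (h : IsAdmissibleHNP 𝒜 ε μ d α) : GradedMul 𝒜 d := h.1.2.1

theorem epsComm (h : IsAdmissibleHNP 𝒜 ε μ d α) : IsEpsComm 𝒜 ε μ := h.1.2.2.2.1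

theorem homAssoc (h : IsAdmissibleHNP 𝒜 ε μ d α) : IsHomAssoc 𝒜 μ α := h.1.2.2.2.2.1

theorem homNovikov (h : IsAdmissibleHNP 𝒜 ε μ d α) : IsHomNovikov 𝒜 ε d α := h.1.2.2.2.2.2.1

theorem mul_right_comm (h : IsAdmissibleHNP 𝒜 ε μ d α)
    (hx : x ∈ 𝒜 a) (hy : y ∈ 𝒜 b) (hz : z ∈ 𝒜 c) :
    μ (μ x y) (α z) = ε b c • μ (μ x z) (α y) :=
  h.epsComm.right_comm h.homAssoc hx hy hz

theorem diam_right_comm (h : IsAdmissibleHNP 𝒜 ε μ d α)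
    (hx : x ∈ 𝒜 a) (hy : y ∈ 𝒜 b) (hz : z ∈ 𝒜 c) :
    d (μ x y) (α z) = ε b c • d (μ x z) (α y) :=
  h.epsComm.right_comm h.2 hx hy hz

theorem mul_diam_eq_diam_mul (hε : IsCommFactor ε) (h : IsAdmissibleHNP 𝒜 ε μ d α)
    (hx : x ∈ 𝒜 a) (hy : y ∈ 𝒜 b) (hz : z ∈ 𝒜 c) :
    μ (d x y) (α z) = d (μ x y) (α z) := by
  have ⟨⟨_, _, _, _, _, _, hcompat, _⟩, _⟩ := h
  refine smul_right_injective A (hε.1 c b) ?_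
  calc ε c b • μ (d x y) (α z) = d (μ x z) (α y) := (hcompat hx hz hy).symm
    _ = ε c b • d (μ x y) (α z) := h.diam_right_comm hx hz hy

theorem mul_twist_diam_eq_diam_mul (hε : IsCommFactor ε) (h : IsAdmissibleHNP 𝒜 ε μ d α)
    (hx : x ∈ 𝒜 a) (hy : y ∈ 𝒜 b) (hz : z ∈ 𝒜 c) :
    μ (α x) (d y z) = d (μ x y) (α z) := by
  have hαx : α x ∈ 𝒜 a := h.1.2.2.1 hx
  calc μ (α x) (d y z) = ε a (b + c) • μ (d y z) (α x) := h.epsComm hαx (h.gradedDiam hy hz)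
    _ = ε a (b + c) • d (μ y z) (α x) := by rw [h.mul_diam_eq_diam_mul hε hy hz hx]
    _ = ε a b • ε a c • d (μ y z) (α x) := by rw [hε.2.2.1, mul_smul]
    _ = ε a b • d (μ y x) (α z) := by rw [h.diam_right_comm hy hx hz]
    _ = d (μ x y) (α z) := (h.epsComm.left_comm d (α z) hx hy).symm

end IsAdmissibleHNP

end TripleProducts

section ColorTensor

variable {𝒜₁ : Γ → Submodule K A₁} {𝒜₂ : Γ → Submodule K A₂} {ε : Γ → Γ → K}
variable {μ₁ d₁ : A₁ →ₗ[K] A₁ →ₗ[K] A₁} {α₁ : A₁ →ₗ[K] A₁}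
variable {μ₂ d₂ : A₂ →ₗ[K] A₂ →ₗ[K] A₂} {α₂ : A₂ →ₗ[K] A₂}
variable {a₁ a₂ b₁ b₂ c₁ c₂ : Γ} {x₁ y₁ z₁ : A₁} {x₂ y₂ z₂ : A₂}

omit [AddCommGroup Γ] in
theorem tDiam_eq_add (δ₁ δ₂ : Γ) :
    tDiam ε μ₁ d₁ μ₂ d₂ δ₁ δ₂ x₁ x₂ y₁ y₂
      = tDot ε d₁ μ₂ δ₁ δ₂ x₁ x₂ y₁ y₂ + tDot ε μ₁ d₂ δ₁ δ₂ x₁ x₂ y₁ y₂ :=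
  smul_add _ _ _

theorem tDot_mem_tGrading (hμ₁ : GradedMul 𝒜₁ μ₁) (hμ₂ : GradedMul 𝒜₂ μ₂)
    (hx₁ : x₁ ∈ 𝒜₁ a₁) (hx₂ : x₂ ∈ 𝒜₂ a₂) (hy₁ : y₁ ∈ 𝒜₁ b₁) (hy₂ : y₂ ∈ 𝒜₂ b₂) :
    tDot ε μ₁ μ₂ a₂ b₁ x₁ x₂ y₁ y₂ ∈ tGrading 𝒜₁ 𝒜₂ ((a₁ + a₂) + (b₁ + b₂)) :=
  Submodule.smul_mem _ _ <| Submodule.subset_span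
    ⟨a₁ + b₁, a₂ + b₂, _, _, add_add_add_comm a₁ b₁ a₂ b₂, hμ₁ hx₁ hy₁, hμ₂ hx₂ hy₂, rfl⟩

theorem tDiam_mem_tGrading (hμ₁ : GradedMul 𝒜₁ μ₁) (hd₁ : GradedMul 𝒜₁ d₁)
    (hμ₂ : GradedMul 𝒜₂ μ₂) (hd₂ : GradedMul 𝒜₂ d₂)
    (hx₁ : x₁ ∈ 𝒜₁ a₁) (hx₂ : x₂ ∈ 𝒜₂ a₂) (hy₁ : y₁ ∈ 𝒜₁ b₁) (hy₂ : y₂ ∈ 𝒜₂ b₂) :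
    tDiam ε μ₁ d₁ μ₂ d₂ a₂ b₁ x₁ x₂ y₁ y₂ ∈ tGrading 𝒜₁ 𝒜₂ ((a₁ + a₂) + (b₁ + b₂)) := by
  rw [tDiam_eq_add]
  exact Submodule.add_mem _ (tDot_mem_tGrading hd₁ hμ₂ hx₁ hx₂ hy₁ hy₂)
    (tDot_mem_tGrading hμ₁ hd₂ hx₁ hx₂ hy₁ hy₂)

theorem IsCommFactor.mul_swap (hε : IsCommFactor ε) (a₁ a₂ b₁ b₂ : Γ) :
    ε a₂ b₁ * (ε a₁ b₁ * ε a₂ b₂) = ε (a₁ + a₂) (b₁ + b₂) * ε b₂ a₁ := by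
  obtain ⟨-, hinv, hadd_right, hadd_left⟩ := hε
  rw [hadd_left, hadd_right, hadd_right]
  linear_combination -(ε a₂ b₁ * ε a₁ b₁ * ε a₂ b₂) * hinv a₁ b₂

theorem tDot_comm (hε : IsCommFactor ε) (hμ₁ : IsEpsComm 𝒜₁ ε μ₁) (hμ₂ : IsEpsComm 𝒜₂ ε μ₂)
    (hx₁ : x₁ ∈ 𝒜₁ a₁) (hx₂ : x₂ ∈ 𝒜₂ a₂) (hy₁ : y₁ ∈ 𝒜₁ b₁) (hy₂ : y₂ ∈ 𝒜₂ b₂) :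
    tDot ε μ₁ μ₂ a₂ b₁ x₁ x₂ y₁ y₂
      = ε (a₁ + a₂) (b₁ + b₂) • tDot ε μ₁ μ₂ b₂ a₁ y₁ y₂ x₁ x₂ := by
  rw [tDot, tDot, hμ₁ hx₁ hy₁, hμ₂ hx₂ hy₂, TensorProduct.smul_tmul_smul, smul_smul, smul_smul,
    hε.mul_swap]

/-- The tensor product of a triple product `u` of `x₁, y₁, z₁` and a triple product `v` of
`x₂, y₂, z₂`, with the sign that `ε` attaches to reordering `x₁ ⊗ x₂ ⊗ y₁ ⊗ y₂ ⊗ z₁ ⊗ z₂` into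
`x₁ ⊗ y₁ ⊗ z₁ ⊗ x₂ ⊗ y₂ ⊗ z₂`. Only the degrees `a₂, b₁, b₂, c₁` of `x₂, y₁, y₂, z₁` enter. -/
noncomputable def tripleTmul (ε : Γ → Γ → K) (a₂ b₁ b₂ c₁ : Γ) :
    A₁ →ₗ[K] A₂ →ₗ[K] A₁ ⊗[K] A₂ :=
  (ε a₂ b₁ * ε a₂ c₁ * ε b₂ c₁) • TensorProduct.mk K A₁ A₂

omit [AddCommGroup Γ] in
theorem tripleTmul_apply (u : A₁) (v : A₂) :
    tripleTmul ε a₂ b₁ b₂ c₁ u v = (ε a₂ b₁ * ε a₂ c₁ * ε b₂ c₁) • u ⊗ₜ[K] v :=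
  rfl

theorem tripleTmul_swap_left (hε : IsCommFactor ε) {u u' : A₁} {v v' : A₂}
    (hu : u = ε a₁ b₁ • u') (hv : v = ε a₂ b₂ • v') :
    tripleTmul ε a₂ b₁ b₂ c₁ u v
      = ε (a₁ + a₂) (b₁ + b₂) • tripleTmul ε b₂ a₁ a₂ c₁ u' v' := by
  rw [hu, hv, tripleTmul_apply, tripleTmul_apply, TensorProduct.smul_tmul_smul, smul_smul,
    smul_smul]
  congr 1
  linear_combination ε a₂ c₁ * ε b₂ c₁ * hε.mul_swap a₁ a₂ b₁ b₂

theorem tripleTmul_swap_right (hε : IsCommFactor ε) {u u' : A₁} {v v' : A₂}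
    (hu : u = ε b₁ c₁ • u') (hv : v = ε b₂ c₂ • v') :
    tripleTmul ε a₂ b₁ b₂ c₁ u v
      = ε (b₁ + b₂) (c₁ + c₂) • tripleTmul ε a₂ c₁ c₂ b₁ u' v' := by
  rw [hu, hv, tripleTmul_apply, tripleTmul_apply, TensorProduct.smul_tmul_smul, smul_smul,
    smul_smul]
  congr 1
  linear_combination ε a₂ b₁ * ε a₂ c₁ * hε.mul_swap b₁ b₂ c₁ c₂

theorem smul_tDot_left (hε : IsCommFactor ε) :
    ε a₂ b₁ • tDot ε μ₁ μ₂ (a₂ + b₂) c₁ x₁ x₂ z₁ z₂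
      = tripleTmul ε a₂ b₁ b₂ c₁ (μ₁ x₁ z₁) (μ₂ x₂ z₂) := by
  rw [tDot, tripleTmul_apply, smul_smul, hε.2.2.2, mul_assoc]

theorem smul_tDot_right (hε : IsCommFactor ε) :
    ε b₂ c₁ • tDot ε μ₁ μ₂ a₂ (b₁ + c₁) x₁ x₂ y₁ y₂
      = tripleTmul ε a₂ b₁ b₂ c₁ (μ₁ x₁ y₁) (μ₂ x₂ y₂) := by
  rw [tDot, tripleTmul_apply, smul_smul, hε.2.2.1, mul_comm]

theorem tDot_assoc (hε : IsCommFactor ε) (hμ₁ : IsHomAssoc 𝒜₁ μ₁ α₁) (hμ₂ : IsHomAssoc 𝒜₂ μ₂ α₂)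
    (hx₁ : x₁ ∈ 𝒜₁ a₁) (hx₂ : x₂ ∈ 𝒜₂ a₂) (hy₁ : y₁ ∈ 𝒜₁ b₁) (hy₂ : y₂ ∈ 𝒜₂ b₂)
    (hz₁ : z₁ ∈ 𝒜₁ c₁) (hz₂ : z₂ ∈ 𝒜₂ c₂) :
    ε a₂ b₁ • tDot ε μ₁ μ₂ (a₂ + b₂) c₁ (μ₁ x₁ y₁) (μ₂ x₂ y₂) (α₁ z₁) (α₂ z₂)
      = ε b₂ c₁ • tDot ε μ₁ μ₂ a₂ (b₁ + c₁) (α₁ x₁) (α₂ x₂) (μ₁ y₁ z₁) (μ₂ y₂ z₂) := by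
  rw [smul_tDot_left hε, smul_tDot_right hε, hμ₁ hx₁ hy₁ hz₁, hμ₂ hx₂ hy₂ hz₂]

theorem smul_tDiam_left (hε : IsCommFactor ε) :
    ε a₂ b₁ • tDiam ε μ₁ d₁ μ₂ d₂ (a₂ + b₂) c₁ x₁ x₂ z₁ z₂
      = tripleTmul ε a₂ b₁ b₂ c₁ (d₁ x₁ z₁) (μ₂ x₂ z₂)
        + tripleTmul ε a₂ b₁ b₂ c₁ (μ₁ x₁ z₁) (d₂ x₂ z₂) := by
  rw [tDiam_eq_add, smul_add, smul_tDot_left hε, smul_tDot_left hε]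

theorem smul_tDiam_right (hε : IsCommFactor ε) :
    ε b₂ c₁ • tDiam ε μ₁ d₁ μ₂ d₂ a₂ (b₁ + c₁) x₁ x₂ y₁ y₂
      = tripleTmul ε a₂ b₁ b₂ c₁ (d₁ x₁ y₁) (μ₂ x₂ y₂)
        + tripleTmul ε a₂ b₁ b₂ c₁ (μ₁ x₁ y₁) (d₂ x₂ y₂) := by
  rw [tDiam_eq_add, smul_add, smul_tDot_right hε, smul_tDot_right hε]

section Admissible

variable (hε : IsCommFactor ε)
variable (h₁ : IsAdmissibleHNP 𝒜₁ ε μ₁ d₁ α₁) (h₂ : IsAdmissibleHNP 𝒜₂ ε μ₂ d₂ α₂)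
variable (hx₁ : x₁ ∈ 𝒜₁ a₁) (hx₂ : x₂ ∈ 𝒜₂ a₂) (hy₁ : y₁ ∈ 𝒜₁ b₁) (hy₂ : y₂ ∈ 𝒜₂ b₂)
variable (hz₁ : z₁ ∈ 𝒜₁ c₁) (hz₂ : z₂ ∈ 𝒜₂ c₂)
include hε h₁ h₂ hx₁ hx₂ hy₁ hy₂ hz₁ hz₂

theorem tDot_tDiam_eq_tDiam_tDot :
    ε a₂ b₁ • (tDot ε μ₁ μ₂ (a₂ + b₂) c₁ (d₁ x₁ y₁) (μ₂ x₂ y₂) (α₁ z₁) (α₂ z₂)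
        + tDot ε μ₁ μ₂ (a₂ + b₂) c₁ (μ₁ x₁ y₁) (d₂ x₂ y₂) (α₁ z₁) (α₂ z₂))
      = ε a₂ b₁ • tDiam ε μ₁ d₁ μ₂ d₂ (a₂ + b₂) c₁ (μ₁ x₁ y₁) (μ₂ x₂ y₂) (α₁ z₁) (α₂ z₂) := by
  rw [smul_add, smul_tDot_left hε, smul_tDot_left hε, smul_tDiam_left hε,
    h₁.mul_diam_eq_diam_mul hε hx₁ hy₁ hz₁, h₂.mul_diam_eq_diam_mul hε hx₂ hy₂ hz₂]

theorem tDiam_tDot_assoc :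
    ε a₂ b₁ • tDiam ε μ₁ d₁ μ₂ d₂ (a₂ + b₂) c₁ (μ₁ x₁ y₁) (μ₂ x₂ y₂) (α₁ z₁) (α₂ z₂)
      = ε b₂ c₁ •
        tDiam ε μ₁ d₁ μ₂ d₂ a₂ (b₁ + c₁) (α₁ x₁) (α₂ x₂) (μ₁ y₁ z₁) (μ₂ y₂ z₂) := by
  rw [smul_tDiam_left hε, smul_tDiam_right hε, h₁.2 hx₁ hy₁ hz₁, h₂.2 hx₂ hy₂ hz₂,
    h₁.homAssoc hx₁ hy₁ hz₁, h₂.homAssoc hx₂ hy₂ hz₂]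

theorem tDiam_tDot_right_comm :
    ε a₂ b₁ • tDiam ε μ₁ d₁ μ₂ d₂ (a₂ + b₂) c₁ (μ₁ x₁ y₁) (μ₂ x₂ y₂) (α₁ z₁) (α₂ z₂)
      = ε (b₁ + b₂) (c₁ + c₂) • ε a₂ c₁ •
        tDiam ε μ₁ d₁ μ₂ d₂ (a₂ + c₂) b₁ (μ₁ x₁ z₁) (μ₂ x₂ z₂) (α₁ y₁) (α₂ y₂) := by
  have hT₁ := h₁.mul_right_comm hx₁ hy₁ hz₁
  have hT₂ := h₂.mul_right_comm hx₂ hy₂ hz₂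
  have hS₁ := h₁.diam_right_comm hx₁ hy₁ hz₁
  have hS₂ := h₂.diam_right_comm hx₂ hy₂ hz₂
  rw [smul_tDiam_left hε, smul_tDiam_left hε, smul_add, tripleTmul_swap_right hε hS₁ hT₂,
    tripleTmul_swap_right hε hT₁ hS₂]

theorem tDiam_tDiam_left :
    ε a₂ b₁ • (tDiam ε μ₁ d₁ μ₂ d₂ (a₂ + b₂) c₁ (d₁ x₁ y₁) (μ₂ x₂ y₂) (α₁ z₁) (α₂ z₂)
        + tDiam ε μ₁ d₁ μ₂ d₂ (a₂ + b₂) c₁ (μ₁ x₁ y₁) (d₂ x₂ y₂) (α₁ z₁) (α₂ z₂))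
      = tripleTmul ε a₂ b₁ b₂ c₁ (d₁ (d₁ x₁ y₁) (α₁ z₁)) (μ₂ (μ₂ x₂ y₂) (α₂ z₂))
        + 2 • tripleTmul ε a₂ b₁ b₂ c₁ (d₁ (μ₁ x₁ y₁) (α₁ z₁)) (d₂ (μ₂ x₂ y₂) (α₂ z₂))
        + tripleTmul ε a₂ b₁ b₂ c₁ (μ₁ (μ₁ x₁ y₁) (α₁ z₁)) (d₂ (d₂ x₂ y₂) (α₂ z₂)) := by
  rw [smul_add, smul_tDiam_left hε, smul_tDiam_left hε,
    h₁.mul_diam_eq_diam_mul hε hx₁ hy₁ hz₁, h₂.mul_diam_eq_diam_mul hε hx₂ hy₂ hz₂]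
  abel

theorem tDiam_tDiam_right :
    ε b₂ c₁ • (tDiam ε μ₁ d₁ μ₂ d₂ a₂ (b₁ + c₁) (α₁ x₁) (α₂ x₂) (d₁ y₁ z₁) (μ₂ y₂ z₂)
        + tDiam ε μ₁ d₁ μ₂ d₂ a₂ (b₁ + c₁) (α₁ x₁) (α₂ x₂) (μ₁ y₁ z₁) (d₂ y₂ z₂))
      = tripleTmul ε a₂ b₁ b₂ c₁ (d₁ (α₁ x₁) (d₁ y₁ z₁)) (μ₂ (μ₂ x₂ y₂) (α₂ z₂))
        + 2 • tripleTmul ε a₂ b₁ b₂ c₁ (d₁ (μ₁ x₁ y₁) (α₁ z₁)) (d₂ (μ₂ x₂ y₂) (α₂ z₂))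
        + tripleTmul ε a₂ b₁ b₂ c₁ (μ₁ (μ₁ x₁ y₁) (α₁ z₁)) (d₂ (α₂ x₂) (d₂ y₂ z₂)) := by
  rw [smul_add, smul_tDiam_right hε, smul_tDiam_right hε,
    ← h₁.homAssoc hx₁ hy₁ hz₁, ← h₂.homAssoc hx₂ hy₂ hz₂,
    ← h₁.2 hx₁ hy₁ hz₁, ← h₂.2 hx₂ hy₂ hz₂,
    h₁.mul_twist_diam_eq_diam_mul hε hx₁ hy₁ hz₁,
    h₂.mul_twist_diam_eq_diam_mul hε hx₂ hy₂ hz₂]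
  abel

theorem tDiam_associator_eq :
    ε a₂ b₁ • (tDiam ε μ₁ d₁ μ₂ d₂ (a₂ + b₂) c₁ (d₁ x₁ y₁) (μ₂ x₂ y₂) (α₁ z₁) (α₂ z₂)
          + tDiam ε μ₁ d₁ μ₂ d₂ (a₂ + b₂) c₁ (μ₁ x₁ y₁) (d₂ x₂ y₂) (α₁ z₁) (α₂ z₂))
        - ε b₂ c₁ • (tDiam ε μ₁ d₁ μ₂ d₂ a₂ (b₁ + c₁) (α₁ x₁) (α₂ x₂) (d₁ y₁ z₁) (μ₂ y₂ z₂)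
          + tDiam ε μ₁ d₁ μ₂ d₂ a₂ (b₁ + c₁) (α₁ x₁) (α₂ x₂) (μ₁ y₁ z₁) (d₂ y₂ z₂))
      = tripleTmul ε a₂ b₁ b₂ c₁ (d₁ (d₁ x₁ y₁) (α₁ z₁) - d₁ (α₁ x₁) (d₁ y₁ z₁))
          (μ₂ (μ₂ x₂ y₂) (α₂ z₂))
        + tripleTmul ε a₂ b₁ b₂ c₁ (μ₁ (μ₁ x₁ y₁) (α₁ z₁))
          (d₂ (d₂ x₂ y₂) (α₂ z₂) - d₂ (α₂ x₂) (d₂ y₂ z₂)) := by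
  rw [tDiam_tDiam_left hε h₁ h₂ hx₁ hx₂ hy₁ hy₂ hz₁ hz₂,
    tDiam_tDiam_right hε h₁ h₂ hx₁ hx₂ hy₁ hy₂ hz₁ hz₂, map_sub, map_sub, LinearMap.sub_apply]
  abel

theorem tDiam_associator_left_comm :
    ε a₂ b₁ • (tDiam ε μ₁ d₁ μ₂ d₂ (a₂ + b₂) c₁ (d₁ x₁ y₁) (μ₂ x₂ y₂) (α₁ z₁) (α₂ z₂)
          + tDiam ε μ₁ d₁ μ₂ d₂ (a₂ + b₂) c₁ (μ₁ x₁ y₁) (d₂ x₂ y₂) (α₁ z₁) (α₂ z₂))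
        - ε b₂ c₁ • (tDiam ε μ₁ d₁ μ₂ d₂ a₂ (b₁ + c₁) (α₁ x₁) (α₂ x₂) (d₁ y₁ z₁) (μ₂ y₂ z₂)
          + tDiam ε μ₁ d₁ μ₂ d₂ a₂ (b₁ + c₁) (α₁ x₁) (α₂ x₂) (μ₁ y₁ z₁) (d₂ y₂ z₂))
      = ε (a₁ + a₂) (b₁ + b₂) •
        (ε b₂ a₁ • (tDiam ε μ₁ d₁ μ₂ d₂ (b₂ + a₂) c₁ (d₁ y₁ x₁) (μ₂ y₂ x₂) (α₁ z₁) (α₂ z₂)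
            + tDiam ε μ₁ d₁ μ₂ d₂ (b₂ + a₂) c₁ (μ₁ y₁ x₁) (d₂ y₂ x₂) (α₁ z₁) (α₂ z₂))
          - ε a₂ c₁ • (tDiam ε μ₁ d₁ μ₂ d₂ b₂ (a₁ + c₁) (α₁ y₁) (α₂ y₂) (d₁ x₁ z₁) (μ₂ x₂ z₂)
            + tDiam ε μ₁ d₁ μ₂ d₂ b₂ (a₁ + c₁) (α₁ y₁) (α₂ y₂) (μ₁ x₁ z₁) (d₂ x₂ z₂))) := by
  have hT₁ := h₁.epsComm.left_comm μ₁ (α₁ z₁) hx₁ hy₁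
  have hT₂ := h₂.epsComm.left_comm μ₂ (α₂ z₂) hx₂ hy₂
  have hassoc₁ := h₁.homNovikov.1 hx₁ hy₁ hz₁
  have hassoc₂ := h₂.homNovikov.1 hx₂ hy₂ hz₂
  rw [tDiam_associator_eq hε h₁ h₂ hx₁ hx₂ hy₁ hy₂ hz₁ hz₂,
    tDiam_associator_eq hε h₁ h₂ hy₁ hy₂ hx₁ hx₂ hz₁ hz₂, smul_add,
    tripleTmul_swap_left hε hassoc₁ hT₂, tripleTmul_swap_left hε hT₁ hassoc₂]

theorem tDiam_tDiam_right_comm :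
    ε a₂ b₁ • (tDiam ε μ₁ d₁ μ₂ d₂ (a₂ + b₂) c₁ (d₁ x₁ y₁) (μ₂ x₂ y₂) (α₁ z₁) (α₂ z₂)
        + tDiam ε μ₁ d₁ μ₂ d₂ (a₂ + b₂) c₁ (μ₁ x₁ y₁) (d₂ x₂ y₂) (α₁ z₁) (α₂ z₂))
      = ε (b₁ + b₂) (c₁ + c₂) •
        (ε a₂ c₁ • (tDiam ε μ₁ d₁ μ₂ d₂ (a₂ + c₂) b₁ (d₁ x₁ z₁) (μ₂ x₂ z₂) (α₁ y₁) (α₂ y₂)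
          + tDiam ε μ₁ d₁ μ₂ d₂ (a₂ + c₂) b₁ (μ₁ x₁ z₁) (d₂ x₂ z₂) (α₁ y₁) (α₂ y₂))) := by
  have hT₁ := h₁.mul_right_comm hx₁ hy₁ hz₁
  have hT₂ := h₂.mul_right_comm hx₂ hy₂ hz₂
  have hS₁ := h₁.diam_right_comm hx₁ hy₁ hz₁
  have hS₂ := h₂.diam_right_comm hx₂ hy₂ hz₂
  have hP₁ := h₁.homNovikov.2 hx₁ hy₁ hz₁
  have hP₂ := h₂.homNovikov.2 hx₂ hy₂ hz₂
  rw [tDiam_tDiam_left hε h₁ h₂ hx₁ hx₂ hy₁ hy₂ hz₁ hz₂,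
    tDiam_tDiam_left hε h₁ h₂ hx₁ hx₂ hz₁ hz₂ hy₁ hy₂,
    tripleTmul_swap_right hε hP₁ hT₂, tripleTmul_swap_right hε hS₁ hS₂,
    tripleTmul_swap_right hε hT₁ hP₂, smul_add, smul_add, smul_comm 2]

end Admissible

end ColorTensor

/-- the tensor product of two admissible Hom-Novikov-Poisson color
Hom-algebras is an admissible Hom-Novikov-Poisson color Hom-algebra (the axioms
are verified on homogeneous pure tensors, with `deg (x₁ ⊗ x₂) = deg x₁ + deg x₂`). -/
theorem tensorProduct_admissibleHNP
    (𝒜₁ : Γ → Submodule K A₁) (𝒜₂ : Γ → Submodule K A₂) (ε : Γ → Γ → K)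
    (μ₁ d₁ : A₁ →ₗ[K] A₁ →ₗ[K] A₁) (α₁ : A₁ →ₗ[K] A₁)
    (μ₂ d₂ : A₂ →ₗ[K] A₂ →ₗ[K] A₂) (α₂ : A₂ →ₗ[K] A₂)
    (hε : IsCommFactor ε)
    (h₁ : IsAdmissibleHNP 𝒜₁ ε μ₁ d₁ α₁) (h₂ : IsAdmissibleHNP 𝒜₂ ε μ₂ d₂ α₂) :
    ∀ ⦃a₁ a₂ b₁ b₂ c₁ c₂ : Γ⦄ ⦃x₁ y₁ z₁ : A₁⦄ ⦃x₂ y₂ z₂ : A₂⦄,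
      x₁ ∈ 𝒜₁ a₁ → x₂ ∈ 𝒜₂ a₂ → y₁ ∈ 𝒜₁ b₁ → y₂ ∈ 𝒜₂ b₂ → z₁ ∈ 𝒜₁ c₁ → z₂ ∈ 𝒜₂ c₂ →
      -- the products are even
      (tDot ε μ₁ μ₂ a₂ b₁ x₁ x₂ y₁ y₂ ∈ tGrading 𝒜₁ 𝒜₂ ((a₁ + a₂) + (b₁ + b₂))) ∧
      (tDiam ε μ₁ d₁ μ₂ d₂ a₂ b₁ x₁ x₂ y₁ y₂ ∈ tGrading 𝒜₁ 𝒜₂ ((a₁ + a₂) + (b₁ + b₂))) ∧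
      -- ε-commutativity of the dot product
      (tDot ε μ₁ μ₂ a₂ b₁ x₁ x₂ y₁ y₂
        = ε (a₁ + a₂) (b₁ + b₂) • tDot ε μ₁ μ₂ b₂ a₁ y₁ y₂ x₁ x₂) ∧
      -- Hom-associativity of the dot product
      (ε a₂ b₁ • tDot ε μ₁ μ₂ (a₂ + b₂) c₁ (μ₁ x₁ y₁) (μ₂ x₂ y₂) (α₁ z₁) (α₂ z₂)
        = ε b₂ c₁ • tDot ε μ₁ μ₂ a₂ (b₁ + c₁) (α₁ x₁) (α₂ x₂) (μ₁ y₁ z₁) (μ₂ y₂ z₂)) ∧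
      -- first Hom-Novikov identity for the diamond product
      (ε a₂ b₁ • (tDiam ε μ₁ d₁ μ₂ d₂ (a₂ + b₂) c₁ (d₁ x₁ y₁) (μ₂ x₂ y₂) (α₁ z₁) (α₂ z₂)
            + tDiam ε μ₁ d₁ μ₂ d₂ (a₂ + b₂) c₁ (μ₁ x₁ y₁) (d₂ x₂ y₂) (α₁ z₁) (α₂ z₂))
          - ε b₂ c₁ • (tDiam ε μ₁ d₁ μ₂ d₂ a₂ (b₁ + c₁) (α₁ x₁) (α₂ x₂) (d₁ y₁ z₁) (μ₂ y₂ z₂)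
            + tDiam ε μ₁ d₁ μ₂ d₂ a₂ (b₁ + c₁) (α₁ x₁) (α₂ x₂) (μ₁ y₁ z₁) (d₂ y₂ z₂))
        = ε (a₁ + a₂) (b₁ + b₂) •
          (ε b₂ a₁ • (tDiam ε μ₁ d₁ μ₂ d₂ (b₂ + a₂) c₁ (d₁ y₁ x₁) (μ₂ y₂ x₂) (α₁ z₁) (α₂ z₂)
              + tDiam ε μ₁ d₁ μ₂ d₂ (b₂ + a₂) c₁ (μ₁ y₁ x₁) (d₂ y₂ x₂) (α₁ z₁) (α₂ z₂))
            - ε a₂ c₁ • (tDiam ε μ₁ d₁ μ₂ d₂ b₂ (a₁ + c₁) (α₁ y₁) (α₂ y₂) (d₁ x₁ z₁) (μ₂ x₂ z₂)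
              + tDiam ε μ₁ d₁ μ₂ d₂ b₂ (a₁ + c₁) (α₁ y₁) (α₂ y₂) (μ₁ x₁ z₁) (d₂ x₂ z₂)))) ∧
      -- second Hom-Novikov identity for the diamond product
      (ε a₂ b₁ • (tDiam ε μ₁ d₁ μ₂ d₂ (a₂ + b₂) c₁ (d₁ x₁ y₁) (μ₂ x₂ y₂) (α₁ z₁) (α₂ z₂)
            + tDiam ε μ₁ d₁ μ₂ d₂ (a₂ + b₂) c₁ (μ₁ x₁ y₁) (d₂ x₂ y₂) (α₁ z₁) (α₂ z₂))
        = ε (b₁ + b₂) (c₁ + c₂) •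
          (ε a₂ c₁ • (tDiam ε μ₁ d₁ μ₂ d₂ (a₂ + c₂) b₁ (d₁ x₁ z₁) (μ₂ x₂ z₂) (α₁ y₁) (α₂ y₂)
            + tDiam ε μ₁ d₁ μ₂ d₂ (a₂ + c₂) b₁ (μ₁ x₁ z₁) (d₂ x₂ z₂) (α₁ y₁) (α₂ y₂)))) ∧
      -- first compatibility: (X·Y)⋄α(Z) = ε(Y,Z) (X⋄Z)·α(Y)
      (ε a₂ b₁ • tDiam ε μ₁ d₁ μ₂ d₂ (a₂ + b₂) c₁ (μ₁ x₁ y₁) (μ₂ x₂ y₂) (α₁ z₁) (α₂ z₂)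
        = ε (b₁ + b₂) (c₁ + c₂) •
          (ε a₂ c₁ • (tDot ε μ₁ μ₂ (a₂ + c₂) b₁ (d₁ x₁ z₁) (μ₂ x₂ z₂) (α₁ y₁) (α₂ y₂)
            + tDot ε μ₁ μ₂ (a₂ + c₂) b₁ (μ₁ x₁ z₁) (d₂ x₂ z₂) (α₁ y₁) (α₂ y₂)))) ∧
      -- second compatibility
      (ε a₂ b₁ • (tDot ε μ₁ μ₂ (a₂ + b₂) c₁ (d₁ x₁ y₁) (μ₂ x₂ y₂) (α₁ z₁) (α₂ z₂)
            + tDot ε μ₁ μ₂ (a₂ + b₂) c₁ (μ₁ x₁ y₁) (d₂ x₂ y₂) (α₁ z₁) (α₂ z₂))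
          - ε b₂ c₁ • tDiam ε μ₁ d₁ μ₂ d₂ a₂ (b₁ + c₁) (α₁ x₁) (α₂ x₂) (μ₁ y₁ z₁) (μ₂ y₂ z₂)
        = ε (a₁ + a₂) (b₁ + b₂) •
          (ε b₂ a₁ • (tDot ε μ₁ μ₂ (b₂ + a₂) c₁ (d₁ y₁ x₁) (μ₂ y₂ x₂) (α₁ z₁) (α₂ z₂)
              + tDot ε μ₁ μ₂ (b₂ + a₂) c₁ (μ₁ y₁ x₁) (d₂ y₂ x₂) (α₁ z₁) (α₂ z₂))
            - ε a₂ c₁ •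
              tDiam ε μ₁ d₁ μ₂ d₂ b₂ (a₁ + c₁) (α₁ y₁) (α₂ y₂) (μ₁ x₁ z₁) (μ₂ x₂ z₂))) ∧
      -- admissibility: (X·Y)⋄α(Z) = α(X)⋄(Y·Z)
      (ε a₂ b₁ • tDiam ε μ₁ d₁ μ₂ d₂ (a₂ + b₂) c₁ (μ₁ x₁ y₁) (μ₂ x₂ y₂) (α₁ z₁) (α₂ z₂)
        = ε b₂ c₁ •
          tDiam ε μ₁ d₁ μ₂ d₂ a₂ (b₁ + c₁) (α₁ x₁) (α₂ x₂) (μ₁ y₁ z₁) (μ₂ y₂ z₂)) := by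
  intro a₁ a₂ b₁ b₂ c₁ c₂ x₁ y₁ z₁ x₂ y₂ z₂ hx₁ hx₂ hy₁ hy₂ hz₁ hz₂
  have hXYZ := tDiam_tDot_assoc hε h₁ h₂ hx₁ hx₂ hy₁ hy₂ hz₁ hz₂
  have hYXZ := tDiam_tDot_assoc hε h₁ h₂ hy₁ hy₂ hx₁ hx₂ hz₁ hz₂
  refine ⟨tDot_mem_tGrading h₁.gradedMul h₂.gradedMul hx₁ hx₂ hy₁ hy₂,
    tDiam_mem_tGrading h₁.gradedMul h₁.gradedDiam h₂.gradedMul h₂.gradedDiam hx₁ hx₂ hy₁ hy₂,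
    tDot_comm hε h₁.epsComm h₂.epsComm hx₁ hx₂ hy₁ hy₂,
    tDot_assoc hε h₁.homAssoc h₂.homAssoc hx₁ hx₂ hy₁ hy₂ hz₁ hz₂,
    tDiam_associator_left_comm hε h₁ h₂ hx₁ hx₂ hy₁ hy₂ hz₁ hz₂,
    tDiam_tDiam_right_comm hε h₁ h₂ hx₁ hx₂ hy₁ hy₂ hz₁ hz₂, ?_, ?_, hXYZ⟩
  · rw [tDot_tDiam_eq_tDiam_tDot hε h₁ h₂ hx₁ hx₂ hz₁ hz₂ hy₁ hy₂]
    exact tDiam_tDot_right_comm hε h₁ h₂ hx₁ hx₂ hy₁ hy₂ hz₁ hz₂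
  -- Both associators `(X ⋄ Y) · α Z - α X ⋄ (Y · Z)` vanish.
  · rw [tDot_tDiam_eq_tDiam_tDot hε h₁ h₂ hx₁ hx₂ hy₁ hy₂ hz₁ hz₂, hXYZ, sub_self,
      tDot_tDiam_eq_tDiam_tDot hε h₁ h₂ hy₁ hy₂ hx₁ hx₂ hz₁ hz₂, hYXZ, sub_self, smul_zero]

end TensorHNP
end

section
/- If (A, ·, ε, α) is a Hom-Novikov color Hom-algebra, then (A, ·, [·,·], ε, α) with [x,y] = x·y − ε(x,y)y·x is a Hom-Gelfand-Dorfman color Hom-algebra. -/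
open scoped TensorProduct

/-!
Measure the failure of Hom-associativity by the Hom-associator
`as(x,y,z) = (x·y)·α(z) − α(x)·(y·z)`, so that the Hom-Novikov axioms say
`as(x,y,z) = ε(x,y) as(y,x,z)` and `(x·y)·α(z) = ε(y,z) (x·z)·α(y)`. For an arbitrary bilinear
product, the Hom-Jacobi sum of the ε-commutator is minus the cyclic sum of
`ε(z,x) (as(x,y,z) − ε(x,y) as(y,x,z))`, so left symmetry gives the Hom-Jacobi identity. Likewise
the two sides of the Gelfand-Dorfman identity are, up to multiples of
`(y·x)·α(z) − ε(x,z) (y·z)·α(x)`, equal to `ε(x,z) as(y,z,x) − as(y,x,z)` and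
`ε(x+y,z) as(z,y,x) − ε(y,x) as(x,y,z)`, which left symmetry identifies.
-/

/-- The Hom-associator `(x·y)·α(z) − α(x)·(y·z)` of a bilinear product with twisting map `α`. -/
def homAssociator {R M : Type*} [CommSemiring R] [AddCommGroup M] [Module R M]
    (μ : M →ₗ[R] M →ₗ[R] M) (α : M →ₗ[R] M) (x y z : M) : M :=
  μ (μ x y) (α z) - μ (α x) (μ y z)

section ColorHomLemmas

variable {K Γ A : Type*} [Field K] [AddCommGroup A] [Module K A]
variable {𝒜 : Γ → Submodule K A} {ε : Γ → Γ → K} {μ : A →ₗ[K] A →ₗ[K] A} {α : A →ₗ[K] A}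

theorem IsHomNovikov.homAssociator_swap (hNov : IsHomNovikov 𝒜 ε μ α) {γ₁ γ₂ γ₃ : Γ}
    {x y z : A} (hx : x ∈ 𝒜 γ₁) (hy : y ∈ 𝒜 γ₂) (hz : z ∈ 𝒜 γ₃) :
    homAssociator μ α x y z = ε γ₁ γ₂ • homAssociator μ α y x z :=
  hNov.1 hx hy hz

theorem IsHomNovikov.mul_right_comm (hNov : IsHomNovikov 𝒜 ε μ α) {γ₁ γ₂ γ₃ : Γ}
    {x y z : A} (hx : x ∈ 𝒜 γ₁) (hy : y ∈ 𝒜 γ₂) (hz : z ∈ 𝒜 γ₃) :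
    μ (μ x y) (α z) = ε γ₂ γ₃ • μ (μ x z) (α y) :=
  hNov.2 hx hy hz

theorem mul_brkt_eq_homAssociator (ε : Γ → Γ → K) (μ : A →ₗ[K] A →ₗ[K] A) (α : A →ₗ[K] A)
    (γ₁ γ₃ : Γ) (x y z : A) :
    μ (α y) (brkt ε μ γ₁ γ₃ x z)
      = ε γ₁ γ₃ • homAssociator μ α y z x - homAssociator μ α y x z
        + (μ (μ y x) (α z) - ε γ₁ γ₃ • μ (μ y z) (α x)) := by
  simp only [brkt, homAssociator, map_sub, map_smul]
  module

variable [AddCommGroup Γ]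

theorem IsCommFactor.mul_swap_s15 (hε : IsCommFactor ε) (a b : Γ) : ε a b * ε b a = 1 :=
  hε.2.1 a b

theorem IsCommFactor.add_right (hε : IsCommFactor ε) (a b c : Γ) :
    ε a (b + c) = ε a b * ε a c :=
  hε.2.2.1 a b c

theorem IsCommFactor.add_left (hε : IsCommFactor ε) (a b c : Γ) :
    ε (a + b) c = ε a c * ε b c :=
  hε.2.2.2 a b c

theorem GradedMul.brkt_mem (hμ : GradedMul 𝒜 μ) (ε : Γ → Γ → K) {γ₁ γ₂ : Γ} {x y : A}
    (hx : x ∈ 𝒜 γ₁) (hy : y ∈ 𝒜 γ₂) : brkt ε μ γ₁ γ₂ x y ∈ 𝒜 (γ₁ + γ₂) :=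
  sub_mem (hμ hx hy) (Submodule.smul_mem _ _ (add_comm γ₂ γ₁ ▸ hμ hy hx))

theorem IsCommFactor.brkt_skew (hε : IsCommFactor ε) (μ : A →ₗ[K] A →ₗ[K] A) (γ₁ γ₂ : Γ)
    (x y : A) : brkt ε μ γ₁ γ₂ x y = -(ε γ₁ γ₂ • brkt ε μ γ₂ γ₁ y x) := by
  simp only [brkt, smul_sub, smul_smul, hε.mul_swap_s15, one_smul, neg_sub]

theorem IsCommFactor.smul_brkt_add (hε : IsCommFactor ε) (μ : A →ₗ[K] A →ₗ[K] A)
    (γ₁ γ₂ γ₃ : Γ) (x y : A) :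
    ε γ₂ γ₁ • brkt ε μ γ₁ (γ₂ + γ₃) x y = ε γ₂ γ₁ • μ x y - ε γ₁ γ₃ • μ y x := by
  rw [brkt, smul_sub, smul_smul, hε.add_right, ← mul_assoc, hε.mul_swap_s15, one_mul]

theorem IsCommFactor.smul_brkt_brkt (hε : IsCommFactor ε) (μ : A →ₗ[K] A →ₗ[K] A)
    (γ₁ γ₂ γ₃ : Γ) (w y z : A) :
    ε γ₃ γ₁ • brkt ε μ γ₁ (γ₂ + γ₃) w (brkt ε μ γ₂ γ₃ y z)
      = ε γ₃ γ₁ • (μ w (μ y z) - ε γ₂ γ₃ • μ w (μ z y))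
        - ε γ₁ γ₂ • (μ (μ y z) w - ε γ₂ γ₃ • μ (μ z y) w) := by
  rw [add_comm γ₂ γ₃, hε.smul_brkt_add]
  simp only [brkt, map_sub, map_smul, LinearMap.sub_apply, LinearMap.smul_apply]

theorem IsCommFactor.homJacobi_sum_brkt (hε : IsCommFactor ε) (μ : A →ₗ[K] A →ₗ[K] A)
    (α : A →ₗ[K] A) (γ₁ γ₂ γ₃ : Γ) (x y z : A) :
    ε γ₃ γ₁ • brkt ε μ γ₁ (γ₂ + γ₃) (α x) (brkt ε μ γ₂ γ₃ y z)
        + ε γ₁ γ₂ • brkt ε μ γ₂ (γ₃ + γ₁) (α y) (brkt ε μ γ₃ γ₁ z x)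
        + ε γ₂ γ₃ • brkt ε μ γ₃ (γ₁ + γ₂) (α z) (brkt ε μ γ₁ γ₂ x y)
      = -(ε γ₃ γ₁ • (homAssociator μ α x y z - ε γ₁ γ₂ • homAssociator μ α y x z)
        + ε γ₁ γ₂ • (homAssociator μ α y z x - ε γ₂ γ₃ • homAssociator μ α z y x)
        + ε γ₂ γ₃ • (homAssociator μ α z x y - ε γ₃ γ₁ • homAssociator μ α x z y)) := by
  simp only [hε.smul_brkt_brkt, homAssociator]
  module

theorem IsCommFactor.gelfandDorfman_sum_brkt (hε : IsCommFactor ε) (μ : A →ₗ[K] A →ₗ[K] A)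
    (α : A →ₗ[K] A) (γ₁ γ₂ γ₃ : Γ) (x y z : A) :
    ε γ₂ γ₁ • brkt ε μ γ₁ (γ₂ + γ₃) (α x) (μ y z)
        - ε (γ₁ + γ₂) γ₃ • brkt ε μ γ₃ (γ₂ + γ₁) (α z) (μ y x)
        + μ (brkt ε μ γ₂ γ₁ y x) (α z) - ε γ₁ γ₃ • μ (brkt ε μ γ₂ γ₃ y z) (α x)
      = ε (γ₁ + γ₂) γ₃ • homAssociator μ α z y x - ε γ₂ γ₁ • homAssociator μ α x y z
        + (2 : K) • (μ (μ y x) (α z) - ε γ₁ γ₃ • μ (μ y z) (α x)) := by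
  rw [hε.smul_brkt_add, add_comm γ₂ γ₁, sub_eq_add_neg _ (ε (γ₁ + γ₂) γ₃ • _), ← hε.brkt_skew]
  simp only [brkt, homAssociator, hε.add_left, map_sub, map_smul, LinearMap.sub_apply,
    LinearMap.smul_apply]
  module

namespace IsHomNovikov

variable {γ₁ γ₂ γ₃ : Γ} {x y z : A}

theorem homJacobi_brkt (hNov : IsHomNovikov 𝒜 ε μ α) (hε : IsCommFactor ε) (hx : x ∈ 𝒜 γ₁)
    (hy : y ∈ 𝒜 γ₂) (hz : z ∈ 𝒜 γ₃) :
    ε γ₃ γ₁ • brkt ε μ γ₁ (γ₂ + γ₃) (α x) (brkt ε μ γ₂ γ₃ y z)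
      + ε γ₁ γ₂ • brkt ε μ γ₂ (γ₃ + γ₁) (α y) (brkt ε μ γ₃ γ₁ z x)
      + ε γ₂ γ₃ • brkt ε μ γ₃ (γ₁ + γ₂) (α z) (brkt ε μ γ₁ γ₂ x y) = 0 := by
  rw [hε.homJacobi_sum_brkt, hNov.homAssociator_swap hx hy hz, hNov.homAssociator_swap hy hz hx,
    hNov.homAssociator_swap hz hx hy]
  simp only [sub_self, smul_zero, add_zero, neg_zero]

theorem gelfandDorfman_brkt (hNov : IsHomNovikov 𝒜 ε μ α) (hε : IsCommFactor ε) (hx : x ∈ 𝒜 γ₁)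
    (hy : y ∈ 𝒜 γ₂) (hz : z ∈ 𝒜 γ₃) :
    μ (α y) (brkt ε μ γ₁ γ₃ x z)
      = ε γ₂ γ₁ • brkt ε μ γ₁ (γ₂ + γ₃) (α x) (μ y z)
        - ε (γ₁ + γ₂) γ₃ • brkt ε μ γ₃ (γ₂ + γ₁) (α z) (μ y x)
        + μ (brkt ε μ γ₂ γ₁ y x) (α z) - ε γ₁ γ₃ • μ (brkt ε μ γ₂ γ₃ y z) (α x) := by
  have defect_eq_zero : μ (μ y x) (α z) - ε γ₁ γ₃ • μ (μ y z) (α x) = 0 :=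
    sub_eq_zero.mpr (hNov.mul_right_comm hy hx hz)
  rw [mul_brkt_eq_homAssociator, hε.gelfandDorfman_sum_brkt, defect_eq_zero, smul_zero,
    hNov.homAssociator_swap hy hz hx, hNov.homAssociator_swap hy hx hz, smul_smul, hε.add_left]

end IsHomNovikov

end ColorHomLemmas

/-- a Hom-Novikov color Hom-algebra with its ε-commutator bracket is a
Hom-Gelfand-Dorfman color Hom-algebra. -/
theorem homNovikov_to_homGelfandDorfman
    {K Γ A : Type*} [Field K] [AddCommGroup Γ] [AddCommGroup A] [Module K A]
    (𝒜 : Γ → Submodule K A) (ε : Γ → Γ → K)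
    (μ : A →ₗ[K] A →ₗ[K] A) (α : A →ₗ[K] A)
    (hε : IsCommFactor ε) (hμ : GradedMul 𝒜 μ) (hα : GradedEnd 𝒜 α)
    (hNov : IsHomNovikov 𝒜 ε μ α) :
    (∀ ⦃γ₁ γ₂ : Γ⦄ ⦃x y : A⦄, x ∈ 𝒜 γ₁ → y ∈ 𝒜 γ₂ →
        brkt ε μ γ₁ γ₂ x y ∈ 𝒜 (γ₁ + γ₂)) ∧
    (∀ ⦃γ₁ γ₂ : Γ⦄ ⦃x y : A⦄, x ∈ 𝒜 γ₁ → y ∈ 𝒜 γ₂ →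
        brkt ε μ γ₁ γ₂ x y = -(ε γ₁ γ₂ • brkt ε μ γ₂ γ₁ y x)) ∧
    (∀ ⦃γ₁ γ₂ γ₃ : Γ⦄ ⦃x y z : A⦄, x ∈ 𝒜 γ₁ → y ∈ 𝒜 γ₂ → z ∈ 𝒜 γ₃ →
        ε γ₃ γ₁ • brkt ε μ γ₁ (γ₂ + γ₃) (α x) (brkt ε μ γ₂ γ₃ y z)
          + ε γ₁ γ₂ • brkt ε μ γ₂ (γ₃ + γ₁) (α y) (brkt ε μ γ₃ γ₁ z x)
          + ε γ₂ γ₃ • brkt ε μ γ₃ (γ₁ + γ₂) (α z) (brkt ε μ γ₁ γ₂ x y) = 0) ∧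
    (∀ ⦃γ₁ γ₂ γ₃ : Γ⦄ ⦃x y z : A⦄, x ∈ 𝒜 γ₁ → y ∈ 𝒜 γ₂ → z ∈ 𝒜 γ₃ →
        μ (α y) (brkt ε μ γ₁ γ₃ x z)
          = ε γ₂ γ₁ • brkt ε μ γ₁ (γ₂ + γ₃) (α x) (μ y z)
            - ε (γ₁ + γ₂) γ₃ • brkt ε μ γ₃ (γ₂ + γ₁) (α z) (μ y x)
            + μ (brkt ε μ γ₂ γ₁ y x) (α z)
            - ε γ₁ γ₃ • μ (brkt ε μ γ₂ γ₃ y z) (α x)) :=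
  ⟨fun _ _ _ _ hx hy => hμ.brkt_mem ε hx hy,
    fun γ₁ γ₂ x y _ _ => hε.brkt_skew μ γ₁ γ₂ x y,
    fun _ _ _ _ _ _ hx hy hz => hNov.homJacobi_brkt hε hx hy hz,
    fun _ _ _ _ _ _ hx hy hz => hNov.gelfandDorfman_brkt hε hx hy hz⟩
end
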